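/- arXiv:1810.05242 — 7 statements merged into one kernel-verified Lean document; each statement's English description precedes it below -/
import Mathlib

section
/- Let R > 0 and let j, k : ℝ → ℝ be functions that are continuous and strictly positive on the interval (0, R], interval-integrable on [0, R], and such that the ratio t ↦ j(t)/k(t) is monotone nondecreasing on (0, R]. Then j(R) · ∫₀^R k(t) dt ≥ k(R) · ∫₀^R j(t) dt; equivalently, j(R)/∫₀^R j(t) dt ≥ k(R)/∫₀^R k(t) dt. -/
/-!
For `0 < t < R`, monotonicity of `j / k` gives `j t / k t ≤ j R / k R`, that is,
`k R * j t ≤ j R * k t`. Integrating in `t` gives the product inequality. Both integrals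
are strictly positive, so dividing by them gives the inequality of quotients.
-/

open MeasureTheory Set

/-- If `j` and `k` are continuous and strictly positive on `(0, R]`,
interval-integrable on `[0, R]`, and the ratio `j/k` is monotone nondecreasing on
`(0, R]`, then `j(R) · ∫₀^R k ≥ k(R) · ∫₀^R j`; equivalently
`j(R)/∫₀^R j ≥ k(R)/∫₀^R k`. -/
theorem stmt0 (R : ℝ) (hR : 0 < R) (j k : ℝ → ℝ)
    (hjc : ContinuousOn j (Set.Ioc 0 R)) (hkc : ContinuousOn k (Set.Ioc 0 R))
    (hjpos : ∀ t ∈ Set.Ioc 0 R, 0 < j t) (hkpos : ∀ t ∈ Set.Ioc 0 R, 0 < k t)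
    (hji : IntervalIntegrable j volume 0 R) (hki : IntervalIntegrable k volume 0 R)
    (hmono : MonotoneOn (fun t => j t / k t) (Set.Ioc 0 R)) :
    j R * ∫ t in (0:ℝ)..R, k t ≥ k R * ∫ t in (0:ℝ)..R, j t ∧
    j R / ∫ t in (0:ℝ)..R, j t ≥ k R / ∫ t in (0:ℝ)..R, k t := by
  have hRmem : R ∈ Set.Ioc 0 R := ⟨hR, le_rfl⟩
  -- Monotonicity of `j / k` at `t ≤ R`, cross-multiplied and then integrated over `[0, R]`.
  have hle : k R * ∫ t in (0:ℝ)..R, j t ≤ j R * ∫ t in (0:ℝ)..R, k t := by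
    rw [← intervalIntegral.integral_const_mul, ← intervalIntegral.integral_const_mul]
    refine intervalIntegral.integral_mono_on_of_le_Ioo hR.le (hji.const_mul _)
      (hki.const_mul _) fun t ht => ?_
    have htmem : t ∈ Set.Ioc 0 R := ⟨ht.1, ht.2.le⟩
    have h := hmono htmem hRmem ht.2.le
    rw [div_le_div_iff₀ (hkpos t htmem) (hkpos R hRmem)] at h
    linarith
  have hJ : 0 < ∫ t in (0:ℝ)..R, j t :=
    intervalIntegral.intervalIntegral_pos_of_pos_on hji
      (fun t ht => hjpos t ⟨ht.1, ht.2.le⟩) hR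
  have hK : 0 < ∫ t in (0:ℝ)..R, k t :=
    intervalIntegral.intervalIntegral_pos_of_pos_on hki
      (fun t ht => hkpos t ⟨ht.1, ht.2.le⟩) hR
  exact ⟨hle, (div_le_div_iff₀ hK hJ).2 hle⟩
end

section
/- Let n ≥ 3 be an integer, let R > 0, and let j : ℝ → ℝ be continuous and strictly positive on (0, R], interval-integrable on [0, R], and such that the ratio t ↦ j(t)/(sinh(t)^{n-2}·cosh(t)) is monotone nondecreasing on (0, R]. Then j(R) ≥ (n-1)·∫₀^R j(t) dt. -/
open MeasureTheory

/-!
Write `J t = sinh t ^ (n - 2) * cosh t` and `c = j R / J R`. Monotonicity of `j / J` gives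
`j t ≤ c * J t` on `(0, R]`. Since `J` is the derivative of `sinh ^ (n - 1) / (n - 1)`,
integrating yields `(n - 1) * ∫₀^R j ≤ c * sinh R ^ (n - 1) = j R * tanh R`, and `tanh R ≤ 1`.
-/

lemma integral_sinh_pow_mul_cosh (m : ℕ) (R : ℝ) :
    ∫ t in (0:ℝ)..R, Real.sinh t ^ m * Real.cosh t = Real.sinh R ^ (m + 1) / (m + 1) := by
  have hm : (m : ℝ) + 1 ≠ 0 := by positivity
  have hderiv : ∀ t ∈ Set.uIcc 0 R, HasDerivAt (fun t => Real.sinh t ^ (m + 1) / ((m : ℝ) + 1))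
      (Real.sinh t ^ m * Real.cosh t) t := by
    intro t _
    refine (((Real.hasDerivAt_sinh t).pow (m + 1)).div_const ((m : ℝ) + 1)).congr_deriv ?_
    rw [div_eq_iff hm]
    push_cast
    ring
  rw [intervalIntegral.integral_eq_sub_of_hasDerivAt hderiv
    (Continuous.intervalIntegrable (by fun_prop) _ _)]
  simp

/-- If `j` is continuous and strictly positive on `(0, R]`, interval-integrable on
`[0, R]`, and `t ↦ j(t)/(sinh(t)^(n-2)·cosh(t))` is monotone nondecreasing on
`(0, R]`, then `j(R) ≥ (n-1)·∫₀^R j(t) dt`. -/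
theorem stmt3 (n : ℕ) (hn : 3 ≤ n) (R : ℝ) (hR : 0 < R) (j : ℝ → ℝ)
    (hjc : ContinuousOn j (Set.Ioc 0 R))
    (hjpos : ∀ t ∈ Set.Ioc 0 R, 0 < j t)
    (hji : IntervalIntegrable j volume 0 R)
    (hmono : MonotoneOn
      (fun t => j t / (Real.sinh t ^ (n - 2) * Real.cosh t)) (Set.Ioc 0 R)) :
    j R ≥ ((n : ℝ) - 1) * ∫ t in (0:ℝ)..R, j t := by
  obtain ⟨m, rfl⟩ : ∃ m, n = m + 2 := ⟨n - 2, by omega⟩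
  simp only [Nat.add_sub_cancel] at hmono
  have hJ : ∀ t : ℝ, 0 < t → 0 < Real.sinh t ^ m * Real.cosh t := fun t ht =>
    mul_pos (pow_pos (Real.sinh_pos_iff.2 ht) m) (Real.cosh_pos t)
  have hRmem : R ∈ Set.Ioc 0 R := ⟨hR, le_rfl⟩
  set c := j R / (Real.sinh R ^ m * Real.cosh R) with hc
  have hbound : ∀ t ∈ Set.Ioo 0 R, j t ≤ c * (Real.sinh t ^ m * Real.cosh t) := fun t ht =>
    (div_le_iff₀ (hJ t ht.1)).1 (hmono ⟨ht.1, ht.2.le⟩ hRmem ht.2.le)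
  have hint : ∫ t in (0:ℝ)..R, j t ≤ c * (Real.sinh R ^ (m + 1) / (m + 1)) := by
    rw [← integral_sinh_pow_mul_cosh, ← intervalIntegral.integral_const_mul]
    exact intervalIntegral.integral_mono_on_of_le_Ioo hR.le hji
      (Continuous.intervalIntegrable (by fun_prop) _ _) hbound
  have hm : (0 : ℝ) < m + 1 := by positivity
  have hcpos : 0 < c := div_pos (hjpos R hRmem) (hJ R hR)
  calc (((m + 2 : ℕ) : ℝ) - 1) * ∫ t in (0:ℝ)..R, j t
      = (m + 1) * ∫ t in (0:ℝ)..R, j t := by push_cast; ring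
    _ ≤ (m + 1) * (c * (Real.sinh R ^ (m + 1) / (m + 1))) :=
        mul_le_mul_of_nonneg_left hint hm.le
    _ = c * (Real.sinh R ^ m * Real.sinh R) := by field_simp; ring
    _ ≤ c * (Real.sinh R ^ m * Real.cosh R) :=
        mul_le_mul_of_nonneg_left (mul_le_mul_of_nonneg_left (Real.sinh_lt_cosh R).le
          (pow_nonneg (Real.sinh_pos_iff.2 hR).le m)) hcpos.le
    _ = j R := div_mul_cancel₀ _ (hJ R hR).ne'
end

section
/- Let n ≥ 3 be an integer, let R > 0, and let j : [0, R] → ℝ be continuous with j(ρ) > 0 and j(ρ) ≥ (n-1)·∫₀^ρ j(u) du for all ρ ∈ [0, R]. Let f : [0, R] → ℝ be continuously differentiable and suppose that ∫₀^R f(ρ)²·j(ρ) dρ ≥ f(R)²·j(R). Then ∫₀^R f(ρ)²·j(ρ) dρ ≤ (4/(n-2)²)·∫₀^R f'(ρ)²·j(ρ) dρ. -/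
/-!
Write `J ρ = ∫₀^ρ j`, so that `J' = j` and `0 ≤ J ≤ j / (n - 1)`. Integrating `(f² J)'` by parts,
`∫ f² j = f(R)² J(R) - ∫ 2 f f' J`. The growth bound at `R` and the boundary hypothesis give
`f(R)² J(R) ≤ (∫ f² j) / (n - 1)`. For the other term, with `m = n - 2`, the weighted AM-GM
inequality `-2 f f' ≤ (m / 2) f² + (2 / m) f'²` replaces Cauchy-Schwarz, its weight being the
optimal one; together with `J ≤ j / (n - 1)` it yields
`m ∫ f² j ≤ (m / 2) ∫ f² j + (2 / m) ∫ f'² j`, which is the claim.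
-/

open MeasureTheory Set

/-- The derivative of `f² J`, with `J` the primitive of `j` vanishing at `0`, integrates to its
boundary value at `R`. -/
lemma integral_by_parts_primitive {R : ℝ} (hR : 0 < R) {j f f' : ℝ → ℝ}
    (hjc : ContinuousOn j (Set.Icc 0 R))
    (hf : ∀ ρ ∈ Set.Icc 0 R, HasDerivWithinAt f (f' ρ) (Set.Icc 0 R) ρ)
    (hf' : ContinuousOn f' (Set.Icc 0 R)) :
    (∫ ρ in (0:ℝ)..R, (2 * f ρ * f' ρ * (∫ u in (0:ℝ)..ρ, j u) + f ρ ^ 2 * j ρ))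
      = f R ^ 2 * ∫ u in (0:ℝ)..R, j u := by
  have hfc : ContinuousOn f (Icc 0 R) := fun x hx => (hf x hx).continuousWithinAt
  have hJc : ContinuousOn (fun ρ => ∫ u in (0:ℝ)..ρ, j u) (Icc 0 R) := by
    have h := intervalIntegral.continuousOn_primitive_interval
      (μ := volume) (f := j) (a := 0) (b := R)
      (by rw [uIcc_of_le hR.le]; exact hjc.integrableOn_Icc)
    rwa [uIcc_of_le hR.le] at h
  have key := intervalIntegral.integral_eq_sub_of_hasDerivAt_of_le hR.le
    (f := fun ρ => f ρ ^ 2 * ∫ u in (0:ℝ)..ρ, j u)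
    (f' := fun ρ => 2 * f ρ * f' ρ * (∫ u in (0:ℝ)..ρ, j u) + f ρ ^ 2 * j ρ)
    ((hfc.pow 2).mul hJc) ?_ ?_
  · rw [key]; simp
  · intro x hx
    have hnhds : Icc 0 R ∈ nhds x := Icc_mem_nhds hx.1 hx.2
    have h1 : HasDerivAt f (f' x) x := (hf x (Ioo_subset_Icc_self hx)).hasDerivAt hnhds
    have h2 : HasDerivAt (fun ρ => ∫ u in (0:ℝ)..ρ, j u) (j x) x := by
      refine intervalIntegral.integral_hasDerivAt_right ?_ ?_ (hjc.continuousAt hnhds)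
      · apply ContinuousOn.intervalIntegrable
        rw [uIcc_of_le hx.1.le]
        exact hjc.mono (Icc_subset_Icc_right hx.2.le)
      · exact (hjc.mono Ioo_subset_Icc_self).stronglyMeasurableAtFilter isOpen_Ioo x hx
    exact ((h1.pow 2).mul h2).congr_deriv (by simp)
  · apply ContinuousOn.intervalIntegrable
    rw [uIcc_of_le hR.le]
    exact (((continuousOn_const.mul hfc).mul hf').mul hJc).add ((hfc.pow 2).mul hjc)

/-- Radial core of Lemma 2.1 for Margulis tubes: if the density `j` is continuous,
positive and satisfies `j(ρ) ≥ (n-1)·∫₀^ρ j` on `[0, R]`, and the C¹ function `f`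
satisfies `∫₀^R f²j ≥ f(R)²·j(R)`, then
`∫₀^R f²j ≤ (4/(n-2)²)·∫₀^R f'²j`. -/
theorem stmt5 (n : ℕ) (hn : 3 ≤ n) (R : ℝ) (hR : 0 < R) (j : ℝ → ℝ)
    (hjc : ContinuousOn j (Set.Icc 0 R))
    (hjpos : ∀ ρ ∈ Set.Icc 0 R, 0 < j ρ)
    (hjgrowth : ∀ ρ ∈ Set.Icc 0 R, j ρ ≥ ((n : ℝ) - 1) * ∫ u in (0:ℝ)..ρ, j u)
    (f f' : ℝ → ℝ)
    (hf : ∀ ρ ∈ Set.Icc 0 R, HasDerivWithinAt f (f' ρ) (Set.Icc 0 R) ρ)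
    (hf' : ContinuousOn f' (Set.Icc 0 R))
    (hbdry : (∫ ρ in (0:ℝ)..R, f ρ ^ 2 * j ρ) ≥ f R ^ 2 * j R) :
    (∫ ρ in (0:ℝ)..R, f ρ ^ 2 * j ρ)
      ≤ (4 / ((n : ℝ) - 2) ^ 2) * ∫ ρ in (0:ℝ)..R, f' ρ ^ 2 * j ρ := by
  have hn3 : (3:ℝ) ≤ n := by exact_mod_cast hn
  obtain ⟨m, hm⟩ : ∃ m : ℝ, m = (n:ℝ) - 2 := ⟨_, rfl⟩
  have hm0 : 0 < m := by linarith
  rw [← hm]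
  have hn1 : (n:ℝ) - 1 = m + 1 := by linarith
  rw [hn1] at hjgrowth
  have hparts := integral_by_parts_primitive hR hjc hf hf'
  have hfc : ContinuousOn f (Icc 0 R) := fun x hx => (hf x hx).continuousWithinAt
  have hII : ∀ {g : ℝ → ℝ}, ContinuousOn g (Icc 0 R) → IntervalIntegrable g volume 0 R := by
    intro g hg
    apply ContinuousOn.intervalIntegrable
    rwa [uIcc_of_le hR.le]
  have hJc : ContinuousOn (fun ρ => ∫ u in (0:ℝ)..ρ, j u) (Icc 0 R) := by
    have h := intervalIntegral.continuousOn_primitive_interval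
      (μ := volume) (f := j) (a := 0) (b := R)
      (by rw [uIcc_of_le hR.le]; exact hjc.integrableOn_Icc)
    rwa [uIcc_of_le hR.le] at h
  have hJ0 : ∀ ρ ∈ Icc 0 R, 0 ≤ ∫ u in (0:ℝ)..ρ, j u := fun ρ hρ =>
    intervalIntegral.integral_nonneg hρ.1 fun u hu => (hjpos u ⟨hu.1, hu.2.trans hρ.2⟩).le
  have hA : IntervalIntegrable (fun ρ => f ρ ^ 2 * j ρ) volume 0 R :=
    hII ((hfc.pow 2).mul hjc)
  have hB : IntervalIntegrable (fun ρ => f' ρ ^ 2 * j ρ) volume 0 R :=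
    hII ((hf'.pow 2).mul hjc)
  have hC : IntervalIntegrable (fun ρ => 2 * f ρ * f' ρ * ∫ u in (0:ℝ)..ρ, j u) volume 0 R :=
    hII (((continuousOn_const (c := (2:ℝ))).mul hfc).mul hf' |>.mul hJc)
  rw [intervalIntegral.integral_add hC hA] at hparts
  have hcross : (m + 1) * -(∫ ρ in (0:ℝ)..R, 2 * f ρ * f' ρ * ∫ u in (0:ℝ)..ρ, j u)
      ≤ m / 2 * (∫ ρ in (0:ℝ)..R, f ρ ^ 2 * j ρ)
        + 2 / m * ∫ ρ in (0:ℝ)..R, f' ρ ^ 2 * j ρ := by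
    rw [← intervalIntegral.integral_neg, ← intervalIntegral.integral_const_mul,
      ← intervalIntegral.integral_const_mul, ← intervalIntegral.integral_const_mul,
      ← intervalIntegral.integral_add (hA.const_mul _) (hB.const_mul _)]
    refine intervalIntegral.integral_mono_on hR.le (hC.neg.const_mul _)
      ((hA.const_mul _).add (hB.const_mul _)) fun ρ hρ => ?_
    have hamgm : -(2 * f ρ * f' ρ) ≤ m / 2 * f ρ ^ 2 + 2 / m * f' ρ ^ 2 := by
      have h : m / 2 * f ρ ^ 2 + 2 / m * f' ρ ^ 2 + 2 * f ρ * f' ρ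
          = (m * f ρ + 2 * f' ρ) ^ 2 / (2 * m) := by
        field_simp
        ring
      have h' : 0 ≤ (m * f ρ + 2 * f' ρ) ^ 2 / (2 * m) := by positivity
      linarith
    have hnn : 0 ≤ m / 2 * f ρ ^ 2 + 2 / m * f' ρ ^ 2 := by positivity
    calc (m + 1) * -(2 * f ρ * f' ρ * ∫ u in (0:ℝ)..ρ, j u)
        = -(2 * f ρ * f' ρ) * ((m + 1) * ∫ u in (0:ℝ)..ρ, j u) := by ring
      _ ≤ (m / 2 * f ρ ^ 2 + 2 / m * f' ρ ^ 2) * ((m + 1) * ∫ u in (0:ℝ)..ρ, j u) :=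
          mul_le_mul_of_nonneg_right hamgm (mul_nonneg (by linarith) (hJ0 ρ hρ))
      _ ≤ (m / 2 * f ρ ^ 2 + 2 / m * f' ρ ^ 2) * j ρ :=
          mul_le_mul_of_nonneg_left (hjgrowth ρ hρ) hnn
      _ = _ := by ring
  have hend : (m + 1) * (f R ^ 2 * ∫ u in (0:ℝ)..R, j u) ≤ ∫ ρ in (0:ℝ)..R, f ρ ^ 2 * j ρ := by
    have h := mul_le_mul_of_nonneg_left (hjgrowth R ⟨hR.le, le_rfl⟩) (sq_nonneg (f R))
    linarith
  rw [← hparts] at hend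
  generalize (∫ ρ in (0:ℝ)..R, f ρ ^ 2 * j ρ) = A at *
  generalize (∫ ρ in (0:ℝ)..R, f' ρ ^ 2 * j ρ) = B at *
  have hfin : m / 2 * A ≤ 2 / m * B := by linarith
  calc A = 2 / m * (m / 2 * A) := by field_simp
    _ ≤ 2 / m * (2 / m * B) := mul_le_mul_of_nonneg_left hfin (by positivity)
    _ = 4 / m ^ 2 * B := by ring
end

section
/- Let n ≥ 3 be an integer and let j : [0, ∞) → ℝ be continuous, strictly positive, integrable on [0, ∞), and satisfy j(ρ) ≥ (n-1)·∫_ρ^∞ j(u) du for all ρ ≥ 0. Let f : [0, ∞) → ℝ be continuously differentiable with ∫₀^∞ f(ρ)²·j(ρ) dρ < ∞ and ∫₀^∞ f'(ρ)²·j(ρ) dρ < ∞, and suppose ∫₀^∞ f(ρ)²·j(ρ) dρ ≥ f(0)²·j(0). Then ∫₀^∞ f(ρ)²·j(ρ) dρ ≤ (4/(n-2)²)·∫₀^∞ f'(ρ)²·j(ρ) dρ. -/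
open MeasureTheory Set

/-! Put `m = n - 1` and `J ρ = ∫_ρ^∞ j`, so `J' = -j` and `m J ≤ j`. The function `G = f² J` is
nonnegative, and for `t = (m - 1) / 2` Young's inequality `2 |f f'| ≤ t f² + f'² / t` gives
`G' = 2 f f' J - f² j ≤ ((t - m) f² j + f'² j / t) / m`.
Integrating over `[0, R]`, dropping `G R ≥ 0` and letting `R → ∞` yields
`-m G 0 ≤ (t - m) A + B / t` with `A = ∫ f² j` and `B = ∫ f'² j`. As
`m G 0 ≤ f(0)² j(0) ≤ A`, this says `(m - 1 - t) A ≤ B / t`, that is `t² A ≤ B`. -/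

/-- The tail integral of `j` has derivative `-j` at interior points. -/
lemma hasDerivAt_tail {j : ℝ → ℝ} (hjc : ContinuousOn j (Ici 0))
    (hjint : IntegrableOn j (Ici 0)) {x : ℝ} (hx : 0 < x) :
    HasDerivAt (fun ρ => ∫ u in Ioi ρ, j u) (-j x) x := by
  have hI : IntervalIntegrable j volume 0 x :=
    (intervalIntegrable_iff_integrableOn_Icc_of_le hx.le).2 (hjint.mono_set Icc_subset_Ici_self)
  have h1 : HasDerivAt (fun ρ => ∫ u in (0:ℝ)..ρ, j u) (j x) x :=
    intervalIntegral.integral_hasDerivAt_right hI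
      ((hjc.mono Ioi_subset_Ici_self).stronglyMeasurableAtFilter isOpen_Ioi x hx)
      (hjc.continuousAt (Ici_mem_nhds hx))
  refine (h1.const_sub (∫ u in Ioi (0:ℝ), j u)).congr_of_eventuallyEq ?_
  filter_upwards [Ioi_mem_nhds hx] with ρ hρ
  have h := intervalIntegral.integral_interval_add_Ioi (hjint.mono_set Ioi_subset_Ici_self)
    (hjint.mono_set (Ioi_subset_Ici (le_of_lt hρ)))
  linarith

lemma continuousOn_tail {j : ℝ → ℝ} (hjint : IntegrableOn j (Ici 0)) :
    ContinuousOn (fun ρ => ∫ u in Ioi ρ, j u) (Ici 0) := by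
  intro x hx
  have hx' : (0:ℝ) ≤ x := hx
  have hC : ContinuousOn (fun ρ => ∫ u in (0:ℝ)..ρ, j u) (Icc 0 (x + 1)) :=
    intervalIntegral.continuousOn_primitive_interval (b := x + 1)
      (by rw [uIcc_of_le (by linarith)]; exact hjint.mono_set Icc_subset_Ici_self) |>.mono
      (by rw [uIcc_of_le (by linarith)])
  have hC' : ContinuousWithinAt (fun ρ => ∫ u in (0:ℝ)..ρ, j u) (Ici 0) x := by
    refine (hC x ⟨hx', by linarith⟩).mono_of_mem_nhdsWithin ?_
    rw [← Ici_inter_Iic]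
    exact Filter.inter_mem self_mem_nhdsWithin
      (mem_nhdsWithin_of_mem_nhds (Iic_mem_nhds (by linarith)))
  have key : ∀ ρ ∈ Ici (0:ℝ),
      (∫ u in Ioi ρ, j u) = (∫ u in Ioi (0:ℝ), j u) - ∫ u in (0:ℝ)..ρ, j u := by
    intro ρ hρ
    have h := intervalIntegral.integral_interval_add_Ioi (hjint.mono_set Ioi_subset_Ici_self)
      (hjint.mono_set (Ioi_subset_Ici hρ))
    linarith
  exact (continuousWithinAt_const.sub hC').congr key (key x hx)

/-- The derivative of `f² J` is controlled by Young's inequality with parameter `t`, using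
`m J ≤ j`. Here `a, b` are the values of `f, f'`. -/
lemma young_bound {m t a b J d : ℝ} (hm : 0 < m) (ht : 0 < t) (hJ : 0 ≤ J) (hJd : m * J ≤ d) :
    2 * a * b * J - a ^ 2 * d ≤ ((t - m) / m) * (a ^ 2 * d) + (1 / (t * m)) * (b ^ 2 * d) := by
  have h1 : 0 ≤ t * a ^ 2 + b ^ 2 / t := by positivity
  have h2 : 2 * a * b ≤ t * a ^ 2 + b ^ 2 / t := by
    have h : t * a ^ 2 + b ^ 2 / t - 2 * a * b = (t * a - b) ^ 2 / t := by field_simp; ring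
    have : 0 ≤ (t * a - b) ^ 2 / t := by positivity
    linarith
  have h3 : J ≤ d / m := by rw [le_div_iff₀ hm]; linarith
  calc 2 * a * b * J - a ^ 2 * d
      ≤ (t * a ^ 2 + b ^ 2 / t) * (d / m) - a ^ 2 * d := by
        have := mul_le_mul_of_nonneg_right h2 hJ
        have := mul_le_mul_of_nonneg_left h3 h1
        linarith
    _ = _ := by field_simp; ring

/-- Radial core of Lemma 2.1 for cusps: if the density `j` is continuous, positive,
integrable on `[0, ∞)` and satisfies `j(ρ) ≥ (n-1)·∫_ρ^∞ j` for all `ρ ≥ 0`, and the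
C¹ function `f` has `∫₀^∞ f²j < ∞`, `∫₀^∞ f'²j < ∞` and
`∫₀^∞ f²j ≥ f(0)²·j(0)`, then `∫₀^∞ f²j ≤ (4/(n-2)²)·∫₀^∞ f'²j`. -/
theorem stmt6 (n : ℕ) (hn : 3 ≤ n) (j : ℝ → ℝ)
    (hjc : ContinuousOn j (Set.Ici 0))
    (hjpos : ∀ ρ ∈ Set.Ici (0:ℝ), 0 < j ρ)
    (hjint : IntegrableOn j (Set.Ici 0))
    (hjgrowth : ∀ ρ ∈ Set.Ici (0:ℝ), j ρ ≥ ((n : ℝ) - 1) * ∫ u in Set.Ioi ρ, j u)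
    (f f' : ℝ → ℝ)
    (hf : ∀ ρ ∈ Set.Ici (0:ℝ), HasDerivWithinAt f (f' ρ) (Set.Ici 0) ρ)
    (hf' : ContinuousOn f' (Set.Ici 0))
    (hfint : IntegrableOn (fun ρ => f ρ ^ 2 * j ρ) (Set.Ici 0))
    (hf'int : IntegrableOn (fun ρ => f' ρ ^ 2 * j ρ) (Set.Ici 0))
    (hbdry : (∫ ρ in Set.Ici (0:ℝ), f ρ ^ 2 * j ρ) ≥ f 0 ^ 2 * j 0) :
    (∫ ρ in Set.Ici (0:ℝ), f ρ ^ 2 * j ρ)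
      ≤ (4 / ((n : ℝ) - 2) ^ 2) * ∫ ρ in Set.Ici (0:ℝ), f' ρ ^ 2 * j ρ := by
  have hn' : (3:ℝ) ≤ n := by exact_mod_cast hn
  set m : ℝ := (n:ℝ) - 1 with hm
  set t : ℝ := ((n:ℝ) - 2) / 2 with ht
  have hmpos : 0 < m := by linarith
  have htpos : 0 < t := by linarith
  set A := ∫ ρ in Ici (0:ℝ), f ρ ^ 2 * j ρ with hA
  set B := ∫ ρ in Ici (0:ℝ), f' ρ ^ 2 * j ρ with hB
  set J : ℝ → ℝ := fun ρ => ∫ u in Ioi ρ, j u with hJ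
  have hJ0 : ∀ ρ ∈ Ici (0:ℝ), 0 ≤ J ρ := fun ρ hρ =>
    setIntegral_nonneg measurableSet_Ioi fun u hu =>
      (hjpos u (le_trans (mem_Ici.1 hρ) (le_of_lt hu))).le
  set φ : ℝ → ℝ := fun ρ =>
    ((t - m) / m) * (f ρ ^ 2 * j ρ) + (1 / (t * m)) * (f' ρ ^ 2 * j ρ) with hφ
  have hφint : IntegrableOn φ (Ici 0) := (hfint.const_mul _).add (hf'int.const_mul _)
  have hfc : ContinuousOn f (Ici 0) := fun x hx => (hf x hx).continuousWithinAt
  have hR : ∀ R : ℝ, 0 ≤ R → -(f 0 ^ 2 * J 0) ≤ ∫ y in (0:ℝ)..R, φ y := by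
    intro R hR
    have h := intervalIntegral.sub_le_integral_of_hasDeriv_right_of_le
      (g := fun ρ => f ρ ^ 2 * J ρ) (g' := fun x => 2 * f x * f' x * J x - f x ^ 2 * j x)
      (φ := φ) hR (((hfc.pow 2).mul (continuousOn_tail hjint)).mono Icc_subset_Ici_self)
      (fun x hx => by
        have hd := ((hf x hx.1.le).hasDerivAt (Ici_mem_nhds hx.1)).pow 2
        refine ((hd.mul (hasDerivAt_tail hjc hjint hx.1)).congr_deriv ?_).hasDerivWithinAt
        simp [hJ]; ring)
      (hφint.mono_set Icc_subset_Ici_self)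
      (fun x hx => young_bound hmpos htpos (hJ0 x hx.1.le) (hjgrowth x hx.1.le))
    have h0 : 0 ≤ f R ^ 2 * J R := mul_nonneg (sq_nonneg _) (hJ0 R hR)
    linarith
  have hlim : -(f 0 ^ 2 * J 0) ≤ ∫ y in Ioi (0:ℝ), φ y :=
    ge_of_tendsto (intervalIntegral_tendsto_integral_Ioi 0
      (hφint.mono_set Ioi_subset_Ici_self) Filter.tendsto_id)
      (Filter.eventually_atTop.2 ⟨0, hR⟩)
  have hval : ∫ y in Ioi (0:ℝ), φ y = ((t - m) / m) * A + (1 / (t * m)) * B := by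
    rw [← integral_Ici_eq_integral_Ioi, hφ,
      integral_add (hfint.const_mul _) (hf'int.const_mul _), integral_const_mul,
      integral_const_mul]
  rw [hval] at hlim
  have hG : m * (f 0 ^ 2 * J 0) ≤ A := by
    have := mul_le_mul_of_nonneg_left (hjgrowth 0 self_mem_Ici) (sq_nonneg (f 0))
    linarith
  have hmain : t ^ 2 * A ≤ B := by
    have h := mul_le_mul_of_nonneg_left hlim (mul_pos htpos hmpos).le
    have e : t * m * (((t - m) / m) * A + (1 / (t * m)) * B) = t * (t - m) * A + B := by
      field_simp
    have hmt : m = 2 * t + 1 := by rw [hm, ht]; ring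
    have h' := mul_le_mul_of_nonneg_left hG htpos.le
    rw [e] at h
    have e2 : t * (t - m) * A = -(t ^ 2 * A) - t * A := by rw [hmt]; ring
    linarith
  have e4 : 4 / ((n:ℝ) - 2) ^ 2 = 1 / t ^ 2 := by
    have : (n:ℝ) - 2 ≠ 0 := by linarith
    rw [ht]; field_simp; norm_num
  rw [e4, one_div, ← div_eq_inv_mul, le_div_iff₀ (by positivity)]
  linarith
end

section
/- Let s < u be real numbers, let w : [s, u] → ℝ be continuously differentiable with w(t) > 0 and w'(t) ≥ 2·w(t) for all t ∈ [s, u], and let f : [s, u] → ℝ be continuously differentiable with f(u)²·w(u) ≤ f(s)²·w(s). Then ∫_s^u f(t)²·w(t) dt ≤ ∫_s^u f'(t)²·w(t) dt. -/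
/-!
The product `f² w` has derivative `2 f f' w + f² w'`. Since `w' ≥ 2 w` and `(f + f')² w ≥ 0`, this
derivative is pointwise at least `f² w - f'² w`. Integrating over `[s, u]`, the fundamental theorem
of calculus gives `∫ f² w - ∫ f'² w ≤ f(u)² w(u) - f(s)² w(s) ≤ 0`. The pointwise square takes the
place of the Cauchy–Schwarz inequality for the integral of `f f' w`.
-/


/-- Key step of Lemma 3.4: on `[s, u]`, if the C¹ weight `w > 0` satisfies
`w' ≥ 2w`, and the C¹ function `f` satisfies `f(u)²·w(u) ≤ f(s)²·w(s)`, then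
`∫_s^u f²w ≤ ∫_s^u f'²w`. -/
theorem stmt11 (s u : ℝ) (hsu : s < u) (w w' f f' : ℝ → ℝ)
    (hw : ∀ t ∈ Set.Icc s u, HasDerivWithinAt w (w' t) (Set.Icc s u) t)
    (hw' : ContinuousOn w' (Set.Icc s u))
    (hwpos : ∀ t ∈ Set.Icc s u, 0 < w t)
    (hwgrowth : ∀ t ∈ Set.Icc s u, w' t ≥ 2 * w t)
    (hf : ∀ t ∈ Set.Icc s u, HasDerivWithinAt f (f' t) (Set.Icc s u) t)
    (hf' : ContinuousOn f' (Set.Icc s u))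
    (hbdry : f u ^ 2 * w u ≤ f s ^ 2 * w s) :
    (∫ t in s..u, f t ^ 2 * w t) ≤ ∫ t in s..u, f' t ^ 2 * w t := by
  have hwc : ContinuousOn w (Set.Icc s u) := fun t ht => (hw t ht).continuousWithinAt
  have hfc : ContinuousOn f (Set.Icc s u) := fun t ht => (hf t ht).continuousWithinAt
  have hint : ∀ g : ℝ → ℝ, ContinuousOn g (Set.Icc s u) →
      IntervalIntegrable g MeasureTheory.volume s u :=
    fun g hg => hg.intervalIntegrable_of_Icc hsu.le
  have hA := hint (fun t => f t ^ 2 * w t) ((hfc.pow 2).mul hwc)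
  have hB := hint (fun t => f' t ^ 2 * w t) ((hf'.pow 2).mul hwc)
  have hD := hint (fun t => 2 * f t * f' t * w t + f t ^ 2 * w' t)
    ((((continuousOn_const.mul hfc).mul hf').mul hwc).add ((hfc.pow 2).mul hw'))
  have hFTC : (∫ t in s..u, (2 * f t * f' t * w t + f t ^ 2 * w' t)) =
      f u ^ 2 * w u - f s ^ 2 * w s := by
    refine intervalIntegral.integral_eq_sub_of_hasDerivAt_of_le
      (f := fun t => f t ^ 2 * w t) hsu.le ((hfc.pow 2).mul hwc) (fun t ht => ?_) hD
    have hmem := Set.Ioo_subset_Icc_self ht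
    have hnhds : Set.Icc s u ∈ nhds t := Icc_mem_nhds ht.1 ht.2
    have h := (((hf t hmem).hasDerivAt hnhds).pow 2).mul ((hw t hmem).hasDerivAt hnhds)
    refine h.congr_deriv ?_
    simp
  have hmono : (∫ t in s..u, (f t ^ 2 * w t - f' t ^ 2 * w t)) ≤
      ∫ t in s..u, (2 * f t * f' t * w t + f t ^ 2 * w' t) := by
    refine intervalIntegral.integral_mono_on hsu.le (hA.sub hB) hD fun t ht => ?_
    -- The difference of the two sides is `f² (w' - 2w) + (f + f')² w`.
    have h1 := mul_nonneg (sq_nonneg (f t)) (sub_nonneg.2 (hwgrowth t ht))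
    have h2 := mul_nonneg (sq_nonneg (f t + f' t)) (hwpos t ht).le
    linarith
  rw [intervalIntegral.integral_sub hA hB] at hmono
  linarith
end

section
/- Let k ≥ 2 be a real number, let w : [0, k] → ℝ be continuously differentiable with w(t) > 0 and w'(t) ≥ 2·w(t) for all t ∈ [0, k], and let f : [0, k] → ℝ be continuously differentiable with ∫₀^1 f(t)²·w(t) dt ≥ 3·∫_{k-1}^k f(t)²·w(t) dt. Then ∫₀^k f'(t)²·w(t) dt ≥ (1/3)·∫₀^k f(t)²·w(t) dt. -/
/-!
Write `g = f² w`. Since `w' ≥ 2 w`, for any cutoff `0 ≤ φ ≤ 1` Young's inequality gives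
`φ g' ≥ φ (2 f f' + 2 f²) w ≥ (2 φ - (2/3) φ²) g - (3/2) f'² w`.
Take `φ` to be the trapezoid equal to `t` on `[0, 1]`, to `1` on `[1, k - 1]` and to `k - t` on
`[k - 1, k]`. As `φ` vanishes at `0` and `k`, integrating `(φ g)' = φ' g + φ g'` over `[0, k]` gives
`0 ≥ A - B + (4/3) M - (3/2) ∫ f'² w`, where `A`, `M`, `B` are the integrals of `g` over the three
pieces. The mass hypothesis `A ≥ 3 B` says exactly that `A - B ≥ (A + B) / 2`, and the claim follows.
The estimate on a single piece, where `φ` is affine, is `affine_cutoff_estimate`.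
-/

/-- Integrated form, on one interval, of
`((p + q t) f² w)' ≥ (q + m) f² w - (3/2) f'² w`, where `m` is a constant lower bound for
`2 φ - (2/3) φ²` and `φ t = p + q t` is nonnegative. -/
theorem affine_cutoff_estimate {a b : ℝ} (hab : a ≤ b) (p q m : ℝ) {w w' f f' : ℝ → ℝ}
    (hw : ∀ t ∈ Set.Icc a b, HasDerivWithinAt w (w' t) (Set.Icc a b) t)
    (hw' : ContinuousOn w' (Set.Icc a b))
    (hwpos : ∀ t ∈ Set.Icc a b, 0 < w t)
    (hwgrowth : ∀ t ∈ Set.Icc a b, w' t ≥ 2 * w t)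
    (hf : ∀ t ∈ Set.Icc a b, HasDerivWithinAt f (f' t) (Set.Icc a b) t)
    (hf' : ContinuousOn f' (Set.Icc a b))
    (hφ : ∀ t ∈ Set.Icc a b, 0 ≤ p + q * t)
    (hm : ∀ t ∈ Set.Icc a b, m ≤ 2 * (p + q * t) - 2 / 3 * (p + q * t) ^ 2) :
    (q + m) * (∫ t in a..b, f t ^ 2 * w t) - 3 / 2 * (∫ t in a..b, f' t ^ 2 * w t)
      ≤ (p + q * b) * (f b ^ 2 * w b) - (p + q * a) * (f a ^ 2 * w a) := by
  have cw : ContinuousOn w (Set.Icc a b) := fun t ht => (hw t ht).continuousWithinAt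
  have cf : ContinuousOn f (Set.Icc a b) := fun t ht => (hf t ht).continuousWithinAt
  have ig : IntervalIntegrable (fun t => f t ^ 2 * w t) MeasureTheory.volume a b :=
    ContinuousOn.intervalIntegrable_of_Icc hab (by fun_prop)
  have ie : IntervalIntegrable (fun t => f' t ^ 2 * w t) MeasureTheory.volume a b :=
    ContinuousOn.intervalIntegrable_of_Icc hab (by fun_prop)
  have iD : IntervalIntegrable (fun t => q * (f t ^ 2 * w t) +
      (p + q * t) * (2 * f t * f' t * w t + f t ^ 2 * w' t)) MeasureTheory.volume a b :=
    ContinuousOn.intervalIntegrable_of_Icc hab (by fun_prop)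
  have ftc := intervalIntegral.integral_eq_sub_of_hasDerivAt_of_le hab
    (f := fun t => (p + q * t) * (f t ^ 2 * w t)) (by fun_prop)
    (fun t ht => by
      have hmem := Icc_mem_nhds ht.1 ht.2
      have hft := (hf t (Set.Ioo_subset_Icc_self ht)).hasDerivAt hmem
      have hwt := (hw t (Set.Ioo_subset_Icc_self ht)).hasDerivAt hmem
      have hφt : HasDerivAt (fun t => p + q * t) q t := by
        simpa using ((hasDerivAt_id t).const_mul q).const_add p
      have h := hφt.mul ((hft.pow 2).mul hwt)
      refine h.congr_deriv (f' := _)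
        (g' := q * (f t ^ 2 * w t) +
          (p + q * t) * (2 * f t * f' t * w t + f t ^ 2 * w' t)) ?_
      simp) iD
  rw [← ftc, ← intervalIntegral.integral_const_mul, ← intervalIntegral.integral_const_mul,
    ← intervalIntegral.integral_sub (ig.const_mul _) (ie.const_mul _)]
  refine intervalIntegral.integral_mono_on hab ((ig.const_mul _).sub (ie.const_mul _)) iD ?_
  intro t ht
  have hw0 := (hwpos t ht).le
  have h1 : 0 ≤ (p + q * t) * f t ^ 2 * (w' t - 2 * w t) :=
    mul_nonneg (mul_nonneg (hφ t ht) (sq_nonneg _)) (by linarith [hwgrowth t ht])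
  have h2 : 0 ≤ (2 * (p + q * t) - 2 / 3 * (p + q * t) ^ 2 - m) * (f t ^ 2 * w t) :=
    mul_nonneg (by linarith [hm t ht]) (mul_nonneg (sq_nonneg _) hw0)
  -- the square that Young's inequality with weights `3/2` and `2/3` completes
  have h3 : 0 ≤ (3 * f' t + 2 * (p + q * t) * f t) ^ 2 * w t := mul_nonneg (sq_nonneg _) hw0
  linear_combination h1 + h2 + h3 / 6

theorem stmt12 (k : ℝ) (hk : 2 ≤ k) (w w' f f' : ℝ → ℝ)
    (hw : ∀ t ∈ Set.Icc 0 k, HasDerivWithinAt w (w' t) (Set.Icc 0 k) t)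
    (hw' : ContinuousOn w' (Set.Icc 0 k))
    (hwpos : ∀ t ∈ Set.Icc 0 k, 0 < w t)
    (hwgrowth : ∀ t ∈ Set.Icc 0 k, w' t ≥ 2 * w t)
    (hf : ∀ t ∈ Set.Icc 0 k, HasDerivWithinAt f (f' t) (Set.Icc 0 k) t)
    (hf' : ContinuousOn f' (Set.Icc 0 k))
    (hmass : (∫ t in (0:ℝ)..1, f t ^ 2 * w t)
      ≥ 3 * ∫ t in (k-1)..k, f t ^ 2 * w t) :
    (∫ t in (0:ℝ)..k, f' t ^ 2 * w t)
      ≥ (1 / 3) * ∫ t in (0:ℝ)..k, f t ^ 2 * w t := by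
  have cw : ContinuousOn w (Set.Icc 0 k) := fun t ht => (hw t ht).continuousWithinAt
  have cf : ContinuousOn f (Set.Icc 0 k) := fun t ht => (hf t ht).continuousWithinAt
  have piece : ∀ a b p q m : ℝ, 0 ≤ a → a ≤ b → b ≤ k →
      (∀ t ∈ Set.Icc a b, 0 ≤ p + q * t) →
      (∀ t ∈ Set.Icc a b, m ≤ 2 * (p + q * t) - 2 / 3 * (p + q * t) ^ 2) →
      (q + m) * (∫ t in a..b, f t ^ 2 * w t) - 3 / 2 * (∫ t in a..b, f' t ^ 2 * w t)
        ≤ (p + q * b) * (f b ^ 2 * w b) - (p + q * a) * (f a ^ 2 * w a) := by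
    intro a b p q m ha hab hb hφ hm
    have hs : Set.Icc a b ⊆ Set.Icc 0 k := Set.Icc_subset_Icc ha hb
    exact affine_cutoff_estimate hab p q m (fun t ht => (hw t (hs ht)).mono hs) (hw'.mono hs)
      (fun t ht => hwpos t (hs ht)) (fun t ht => hwgrowth t (hs ht))
      (fun t ht => (hf t (hs ht)).mono hs) (hf'.mono hs) hφ hm
  have e1 := piece 0 1 0 1 0 le_rfl zero_le_one (by linarith)
    (fun t ht => by linarith [ht.1]) (fun t ht => by nlinarith [ht.1, ht.2])
  have e2 := piece 1 (k - 1) 1 0 (4 / 3) zero_le_one (by linarith) (by linarith)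
    (fun t ht => by norm_num) (fun t ht => by norm_num)
  have e3 := piece (k - 1) k k (-1) 0 (by linarith) (by linarith) le_rfl
    (fun t ht => by linarith [ht.2]) (fun t ht => by nlinarith [ht.1, ht.2])
  have split : ∀ g : ℝ → ℝ, ContinuousOn g (Set.Icc 0 k) →
      (∫ t in (0:ℝ)..k, g t)
        = (∫ t in (0:ℝ)..1, g t) + (∫ t in (1:ℝ)..(k-1), g t) + ∫ t in (k-1)..k, g t := by
    intro g hg
    have hi : ∀ a b : ℝ, 0 ≤ a → a ≤ b → b ≤ k →
        IntervalIntegrable g MeasureTheory.volume a b := fun a b ha hab hb =>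
      ContinuousOn.intervalIntegrable_of_Icc hab (hg.mono (Set.Icc_subset_Icc ha hb))
    rw [intervalIntegral.integral_add_adjacent_intervals
        (hi _ _ le_rfl zero_le_one (by linarith)) (hi _ _ zero_le_one (by linarith) (by linarith)),
      intervalIntegral.integral_add_adjacent_intervals
        (hi _ _ le_rfl (by linarith) (by linarith)) (hi _ _ (by linarith) (by linarith) le_rfl)]
  have hM : 0 ≤ ∫ t in (1:ℝ)..(k-1), f t ^ 2 * w t :=
    intervalIntegral.integral_nonneg (by linarith) fun t ht =>
      mul_nonneg (sq_nonneg _) (hwpos t ⟨by linarith [ht.1], by linarith [ht.2]⟩).le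
  rw [split (fun t => f' t ^ 2 * w t) (by fun_prop), split (fun t => f t ^ 2 * w t) (by fun_prop)]
  ring_nf at e1 e2 e3 hmass hM ⊢
  linarith
end

section
/- Let w : [0, 96] → ℝ be continuously differentiable with w(t) > 0 and w'(t) ≥ 2·w(t) for all t ∈ [0, 96], and let f : [0, 96] → ℝ be continuously differentiable with ∫₀^{96} f'(t)²·w(t) dt ≤ (1/96)·∫₀^{96} f(t)²·w(t) dt. Then ∫₀^1 f(t)²·w(t) dt ≤ (1/32)·∫₀^{96} f(t)²·w(t) dt. -/
/-!
For `T ∈ [1, 96]`, integrating `(f²w)' = 2ff'w + f²w' ≥ (2ff' + 2f²)w ≥ (f² - f'²)w` over `[0, T]`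
gives `f(T)²w(T) ≥ ∫₀ᵀ f²w - ∫₀ᵀ f'²w ≥ m - E`, where `m = ∫₀¹ f²w` and `E = ∫₀⁹⁶ f'²w`.
Averaging over `T ∈ [1, 96]` yields `95 (m - E) ≤ F` with `F = ∫₀⁹⁶ f²w`, so that
`m ≤ F/95 + F/96 ≤ F/32`.
-/

/-- Radial core of Corollary 3.5: on the shell `[0, 96]` with C¹ weight `w > 0`
satisfying `w' ≥ 2w`, if `∫₀^{96} f'²w ≤ (1/96)·∫₀^{96} f²w`, then
`∫₀^1 f²w ≤ (1/32)·∫₀^{96} f²w`. -/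
theorem stmt13 (w w' f f' : ℝ → ℝ)
    (hw : ∀ t ∈ Set.Icc (0:ℝ) 96, HasDerivWithinAt w (w' t) (Set.Icc (0:ℝ) 96) t)
    (hw' : ContinuousOn w' (Set.Icc (0:ℝ) 96))
    (hwpos : ∀ t ∈ Set.Icc (0:ℝ) 96, 0 < w t)
    (hwgrowth : ∀ t ∈ Set.Icc (0:ℝ) 96, w' t ≥ 2 * w t)
    (hf : ∀ t ∈ Set.Icc (0:ℝ) 96, HasDerivWithinAt f (f' t) (Set.Icc (0:ℝ) 96) t)
    (hf' : ContinuousOn f' (Set.Icc (0:ℝ) 96))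
    (hrayleigh : (∫ t in (0:ℝ)..96, f' t ^ 2 * w t)
      ≤ (1 / 96) * ∫ t in (0:ℝ)..96, f t ^ 2 * w t) :
    (∫ t in (0:ℝ)..1, f t ^ 2 * w t)
      ≤ (1 / 32) * ∫ t in (0:ℝ)..96, f t ^ 2 * w t := by
  have hwc : ContinuousOn w (Set.Icc (0:ℝ) 96) := fun t ht => (hw t ht).continuousWithinAt
  have hfc : ContinuousOn f (Set.Icc (0:ℝ) 96) := fun t ht => (hf t ht).continuousWithinAt
  have hFc : ContinuousOn (fun t => f t ^ 2 * w t) (Set.Icc (0:ℝ) 96) := (hfc.pow 2).mul hwc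
  have hEc : ContinuousOn (fun t => f' t ^ 2 * w t) (Set.Icc (0:ℝ) 96) := (hf'.pow 2).mul hwc
  have hGc : ContinuousOn (fun t => 2 * f t * f' t * w t + f t ^ 2 * w' t)
      (Set.Icc (0:ℝ) 96) :=
    (((continuousOn_const.mul hfc).mul hf').mul hwc).add ((hfc.pow 2).mul hw')
  have hint : ∀ g : ℝ → ℝ, ContinuousOn g (Set.Icc (0:ℝ) 96) → ∀ a b : ℝ, 0 ≤ a → a ≤ b →
      b ≤ 96 → IntervalIntegrable g MeasureTheory.volume a b := fun g hg a b ha hab hb =>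
    (hg.mono (Set.Icc_subset_Icc ha hb)).intervalIntegrable_of_Icc hab
  -- An integral of a nonnegative function grows with the upper limit.
  have hmono : ∀ g : ℝ → ℝ, ContinuousOn g (Set.Icc (0:ℝ) 96) →
      (∀ t ∈ Set.Icc (0:ℝ) 96, 0 ≤ g t) → ∀ a b : ℝ, 0 ≤ a → a ≤ b → b ≤ 96 →
      (∫ t in (0:ℝ)..a, g t) ≤ ∫ t in (0:ℝ)..b, g t := by
    intro g hg hg0 a b ha hab hb
    rw [← intervalIntegral.integral_add_adjacent_intervals
      (hint g hg 0 a le_rfl ha (hab.trans hb)) (hint g hg a b ha hab hb)]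
    have : 0 ≤ ∫ t in a..b, g t := intervalIntegral.integral_nonneg hab fun t ht =>
      hg0 t ⟨ha.trans ht.1, ht.2.trans hb⟩
    linarith
  have hF0 : ∀ t ∈ Set.Icc (0:ℝ) 96, 0 ≤ f t ^ 2 * w t := fun t ht =>
    mul_nonneg (sq_nonneg _) (hwpos t ht).le
  have hE0 : ∀ t ∈ Set.Icc (0:ℝ) 96, 0 ≤ f' t ^ 2 * w t := fun t ht =>
    mul_nonneg (sq_nonneg _) (hwpos t ht).le
  have key : ∀ T ∈ Set.Icc (1:ℝ) 96,
      (∫ t in (0:ℝ)..1, f t ^ 2 * w t) - (∫ t in (0:ℝ)..96, f' t ^ 2 * w t)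
        ≤ f T ^ 2 * w T := by
    intro T hT
    have hT0 : (0:ℝ) ≤ T := zero_le_one.trans hT.1
    have hftc : (∫ t in (0:ℝ)..T, (2 * f t * f' t * w t + f t ^ 2 * w' t))
        = f T ^ 2 * w T - f 0 ^ 2 * w 0 := by
      refine intervalIntegral.integral_eq_sub_of_hasDerivAt_of_le
        (f := fun t => f t ^ 2 * w t) hT0
        (hFc.mono (Set.Icc_subset_Icc le_rfl hT.2)) (fun t ht => ?_)
        (hint _ hGc 0 T le_rfl hT0 hT.2)
      have ht' : t ∈ Set.Icc (0:ℝ) 96 := ⟨ht.1.le, ht.2.le.trans hT.2⟩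
      have hn : Set.Icc (0:ℝ) 96 ∈ nhds t := Icc_mem_nhds ht.1 (ht.2.trans_le hT.2)
      have h := (((hf t ht').hasDerivAt hn).pow 2).mul ((hw t ht').hasDerivAt hn)
      refine h.congr_deriv ?_
      simp
    have hle : (∫ t in (0:ℝ)..T, (f t ^ 2 * w t - f' t ^ 2 * w t))
        ≤ ∫ t in (0:ℝ)..T, (2 * f t * f' t * w t + f t ^ 2 * w' t) := by
      refine intervalIntegral.integral_mono_on hT0
        (hint _ (hFc.sub hEc) 0 T le_rfl hT0 hT.2) (hint _ hGc 0 T le_rfl hT0 hT.2) ?_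
      intro t ht
      have ht' : t ∈ Set.Icc (0:ℝ) 96 := ⟨ht.1, ht.2.trans hT.2⟩
      have h1 := mul_le_mul_of_nonneg_left (hwgrowth t ht') (sq_nonneg (f t))
      have h2 := mul_nonneg (sq_nonneg (f t + f' t)) (hwpos t ht').le
      nlinarith
    rw [intervalIntegral.integral_sub (hint _ hFc 0 T le_rfl hT0 hT.2)
      (hint _ hEc 0 T le_rfl hT0 hT.2), hftc] at hle
    have h1 := hmono _ hFc hF0 1 T zero_le_one hT.1 hT.2
    have h2 := hmono _ hEc hE0 T 96 hT0 hT.2 le_rfl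
    have h3 := hF0 0 (by norm_num)
    linarith
  have havg := intervalIntegral.integral_mono_on (μ := MeasureTheory.volume)
    (by norm_num : (1:ℝ) ≤ 96) intervalIntegrable_const
    (hint _ hFc 1 96 (by norm_num) (by norm_num) le_rfl) key
  rw [intervalIntegral.integral_const, smul_eq_mul] at havg
  have hsplit := intervalIntegral.integral_add_adjacent_intervals
    (hint _ hFc 0 1 le_rfl (by norm_num) (by norm_num))
    (hint _ hFc 1 96 (by norm_num) (by norm_num) le_rfl)
  have hm : 0 ≤ ∫ t in (0:ℝ)..1, f t ^ 2 * w t :=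
    intervalIntegral.integral_nonneg zero_le_one fun t ht =>
      hF0 t ⟨ht.1, ht.2.trans (by norm_num)⟩
  have hF : 0 ≤ ∫ t in (0:ℝ)..96, f t ^ 2 * w t :=
    intervalIntegral.integral_nonneg (by norm_num) hF0
  linarith
end
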